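/- arXiv:1703.01581 — 3 statements merged into one kernel-verified Lean document; each statement's English description precedes it below -/
import Mathlib

section
/- Let r, k ∈ ℕ and let ℕ = A₁ ∪ A₂ ∪ … ∪ A_r be a finite partition of the positive integers. Then there exist s ∈ {1, 2, …, r} and a, b, d ∈ A_s such that {b·(a + i·d)^j : i, j ∈ {0, 1, …, k}} ∪ {b·d^j : j ∈ {0, 1, …, k}} ∪ {a + i·d : i ∈ {0, 1, …, k}} ⊆ A_s. -/
/-!
The proof runs one geometric extension argument twice. Let `M` be a commutative monoid and `𝓕` a
partition regular family of finite subsets of `M`. Some ultrafilter `p` on `M` has a member of `𝓕`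
inside each of its sets. Colour an exponent vector `w` by the colour that `∏ i, v i ^ w i` has for
almost every `v` with respect to the `n`-fold tensor power of `p`. The Hales-Jewett theorem yields
vectors `w` and `b + j • w`, `j ≤ k`, of one colour, with `w t = 1` and `b t = 0` for some `t`. When
only the coordinate `v t = x` varies, over some `F ∈ 𝓕`, the corresponding products are `c * x` and
`B * (c * x) ^ j`.

In the additive monoid `ℕ` with `𝓕 = {{1}}` this gives Brauer's theorem: `d, a, a + d, …, a + k * d`
can be found in one colour. In the multiplicative monoid `ℕ+`, with `𝓕` given by Brauer's theorem,
it gives the result.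
-/

open Combinatorics Filter Function

universe u

section Progressions

variable {η ι κ α : Type*} {N K : ℕ}

/-- The vectors with entries in `{0, …, K}` and some entry equal to `1`: the candidates for the
common difference `w` of a Brauer progression. -/
def unitBox (ι : Type*) (K : ℕ) : Set (ι → ℕ) :=
  {w | (∀ t, w t ≤ K) ∧ ∃ t, w t = 1}

theorem unitBox_mono (h : K ≤ N) : unitBox ι K ⊆ unitBox ι N :=
  fun _ hw ↦ ⟨fun t ↦ (hw.1 t).trans h, hw.2⟩

/-- The colouring `χ` of `ι → ℕ` is constant on a progression `b, b + w, …, b + k • w` together with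
its common difference `w`, where `w t = 1` and `b t = 0` for some coordinate `t`. With `w` and `b`
as exponents, `v t` enters `∏ i, v i ^ w i` linearly and `∏ i, v i ^ b i` not at all. -/
def HasMonoBrauerProgression (k : ℕ) (χ : (ι → ℕ) → κ) : Prop :=
  ∃ b w : ι → ℕ, ∃ t, w t = 1 ∧ b t = 0 ∧ ∀ j ≤ k, χ (b + j • w) = χ w

/-- The linear part of a combinatorial subspace, extended from the alphabet to all of `ℕ`: the fixed
coordinates are set to `0`. -/
def subspaceDirection (l : Subspace η α ι) : (η → ℕ) →+ (ι → ℕ) where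
  toFun w i := (l.idxFun i).elim (fun _ ↦ 0) w
  map_zero' := by ext i; cases l.idxFun i <;> simp
  map_add' v w := by ext i; cases h : l.idxFun i <;> simp [h]

/-- The point of a combinatorial subspace over the alphabet `{0, …, N - 1}` at which all free
coordinates vanish. -/
def subspaceBase (l : Subspace η (Fin N) ι) : ι → ℕ :=
  fun i ↦ (l.idxFun i).elim Fin.val fun _ ↦ 0

theorem subspaceDirection_apply_of_eq_inr {l : Subspace η α ι} {i : ι} {e : η}
    (h : l.idxFun i = .inr e) (w : η → ℕ) : subspaceDirection l w i = w e := by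
  simp [subspaceDirection, h]

theorem subspaceBase_apply_of_eq_inr {l : Subspace η (Fin N) ι} {i : ι} {e : η}
    (h : l.idxFun i = .inr e) : subspaceBase l i = 0 := by
  simp [subspaceBase, h]

theorem subspaceBase_add_subspaceDirection (l : Subspace η (Fin N) ι) {w : η → ℕ}
    (hw : ∀ e, w e < N) :
    subspaceBase l + subspaceDirection l w = fun i ↦ (l (fun e ↦ ⟨w e, hw e⟩) i : ℕ) := by
  ext i
  cases h : l.idxFun i <;> simp [subspaceBase, subspaceDirection, l.apply_def, h]

theorem subspaceDirection_mem_unitBox (l : Subspace η α ι) {w : η → ℕ} (hw : w ∈ unitBox η K) :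
    subspaceDirection l w ∈ unitBox ι K := by
  obtain ⟨hwK, e, he⟩ := hw
  obtain ⟨i, hi⟩ := l.proper e
  refine ⟨fun i ↦ ?_, i, by rw [subspaceDirection_apply_of_eq_inr hi, he]⟩
  cases h : l.idxFun i <;> simp [subspaceDirection, h, hwK]

theorem subspaceBase_add_subspaceDirection_mem_unitBox (l : Subspace η (Fin (N + 1)) ι) {w : η → ℕ}
    (hw : w ∈ unitBox η N) : subspaceBase l + subspaceDirection l w ∈ unitBox ι N := by
  obtain ⟨hwN, e, he⟩ := hw
  obtain ⟨i, hi⟩ := l.proper e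
  refine ⟨fun i ↦ ?_, i, ?_⟩
  · rw [subspaceBase_add_subspaceDirection l fun e ↦ Nat.lt_succ_of_le (hwN e)]
    exact Fin.is_le _
  · simp [subspaceDirection_apply_of_eq_inr hi, subspaceBase_apply_of_eq_inr hi, he]

theorem HasMonoBrauerProgression.of_comp_subspaceDirection {k : ℕ} {χ : (ι → ℕ) → κ}
    (l : Subspace η α ι) (h : HasMonoBrauerProgression k (χ ∘ subspaceDirection l)) :
    HasMonoBrauerProgression k χ := by
  obtain ⟨b, w, e, hw, hb, h⟩ := h
  obtain ⟨i, hi⟩ := l.proper e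
  refine ⟨subspaceDirection l b, subspaceDirection l w, i, ?_, ?_, fun j hj ↦ ?_⟩
  · rw [subspaceDirection_apply_of_eq_inr hi, hw]
  · rw [subspaceDirection_apply_of_eq_inr hi, hb]
  · simpa only [comp_apply, map_add, map_nsmul] using h j hj

theorem HasMonoBrauerProgression.of_subspace {k : ℕ} {χ : (ι → ℕ) → κ}
    (l : Subspace η (Fin N) ι) {c : κ} {w : η → ℕ}
    (hl : ∀ v : η → ℕ, (∀ e, v e ≤ k * K) → χ (subspaceBase l + subspaceDirection l v) = c)
    (hw : w ∈ unitBox η K) (hwc : χ (subspaceDirection l w) = c) :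
    HasMonoBrauerProgression k χ := by
  obtain ⟨hwK, e, he⟩ := hw
  obtain ⟨i, hi⟩ := l.proper e
  refine ⟨subspaceBase l, subspaceDirection l w, i, ?_, subspaceBase_apply_of_eq_inr hi,
    fun j hj ↦ ?_⟩
  · rw [subspaceDirection_apply_of_eq_inr hi, he]
  · rw [← map_nsmul, hwc, hl]
    exact fun e ↦ Nat.mul_le_mul hj (hwK e)

/-- By induction on `r`: on a monochromatic subspace of colour `c`, either the direction space meets
the colour `c` in the box and we are done, or the direction space sees one colour fewer. -/
theorem exists_hasMonoBrauerProgression_of_ncard_le (k : ℕ) (κ : Type*) [Finite κ] (r : ℕ) :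
    ∃ n K : ℕ, ∀ χ : (Fin n → ℕ) → κ, (χ '' unitBox (Fin n) K).ncard ≤ r →
      HasMonoBrauerProgression k χ := by
  induction r with
  | zero =>
    refine ⟨1, 1, fun χ h ↦ absurd h ?_⟩
    have one_mem : (1 : Fin 1 → ℕ) ∈ unitBox (Fin 1) 1 := ⟨fun _ ↦ le_rfl, 0, rfl⟩
    exact ((Set.ncard_pos).2 ⟨_, Set.mem_image_of_mem χ one_mem⟩).not_ge
  | succ r ih =>
    obtain ⟨n, K, hn⟩ := ih
    obtain ⟨N, hkN, hKN⟩ : ∃ N, k * K ≤ N ∧ K ≤ N := ⟨_, le_max_left _ _, le_max_right _ _⟩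
    obtain ⟨m, hm⟩ := Subspace.exists_mono_in_high_dimension_fin (Fin (N + 1)) κ (Fin n)
    refine ⟨m, N, fun χ hχ ↦ ?_⟩
    obtain ⟨l, c, hl⟩ := hm fun v ↦ χ fun i ↦ v i
    have mono (w : Fin n → ℕ) (hw : ∀ e, w e ≤ N) :
        χ (subspaceBase l + subspaceDirection l w) = c := by
      rw [subspaceBase_add_subspaceDirection l fun e ↦ Nat.lt_succ_of_le (hw e)]
      exact hl _
    by_cases hc : ∃ w ∈ unitBox (Fin n) K, χ (subspaceDirection l w) = c
    · obtain ⟨w, hw, hwc⟩ := hc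
      exact .of_subspace l (fun v hv ↦ mono v fun e ↦ (hv e).trans hkN) hw hwc
    refine .of_comp_subspaceDirection l (hn _ ?_)
    by_contra! hr
    obtain ⟨_, w₀, hw₀, -⟩ := Set.nonempty_of_ncard_ne_zero hr.ne_zero
    have hsub : χ ∘ subspaceDirection l '' unitBox (Fin n) K ⊂ χ '' unitBox (Fin m) N := by
      refine Set.ssubset_iff_exists.2 ⟨?_, c, ⟨_,
        subspaceBase_add_subspaceDirection_mem_unitBox l (unitBox_mono hKN hw₀),
        mono w₀ (unitBox_mono hKN hw₀).1⟩, hc⟩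
      rintro _ ⟨w, hw, rfl⟩
      exact ⟨_, unitBox_mono hKN (subspaceDirection_mem_unitBox l hw), rfl⟩
    have := Set.ncard_lt_ncard hsub
    lia

theorem exists_forall_hasMonoBrauerProgression (k : ℕ) (κ : Type*) [Finite κ] :
    ∃ n : ℕ, ∀ χ : (Fin n → ℕ) → κ, HasMonoBrauerProgression k χ := by
  obtain ⟨n, K, h⟩ := exists_hasMonoBrauerProgression_of_ncard_le k κ (Nat.card κ)
  exact ⟨n, fun χ ↦ h χ (Set.ncard_le_card _)⟩

end Progressions

section PartitionRegular

variable {X : Type u}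

/-- Every finite colouring of `X` is constant on some member of `𝓕`. Restricting the colours to the
universe of `X` loses nothing, since only their number matters. -/
def IsPartitionRegular (𝓕 : Set (Finset X)) : Prop :=
  ∀ (κ : Type u) [Finite κ] (f : X → κ), ∃ F ∈ 𝓕, ∃ c, ∀ x ∈ F, f x = c

variable {𝓕 : Set (Finset X)}

theorem exists_eventually_eq {κ : Type*} [Finite κ] (p : Ultrafilter X) (f : X → κ) :
    ∃ c, ∀ᶠ x in p, f x = c := by
  obtain ⟨c, hc⟩ := (p.map f).eq_pure_of_finite
  have hmem : {c} ∈ p.map f := hc ▸ rfl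
  exact ⟨c, hmem⟩

theorem IsPartitionRegular.exists_ultrafilter (h𝓕 : IsPartitionRegular 𝓕) :
    ∃ p : Ultrafilter X, ∀ S ∈ p, ∃ F ∈ 𝓕, (F : Set X) ⊆ S := by
  obtain ⟨p, hp⟩ := Ultrafilter.exists_ultrafilter_of_finite_inter_nonempty
    {S : Set X | ¬∃ F ∈ 𝓕, (F : Set X) ⊆ Sᶜ} fun T hT ↦ by
      by_contra hempty
      -- Colour each point by a set of `T` that misses it.
      have hmiss (x : X) : ∃ S : T, x ∉ S.1 := by
        by_contra! hx
        exact hempty ⟨x, fun S hS ↦ hx ⟨S, hS⟩⟩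
      choose f hf using hmiss
      obtain ⟨F, hF, S, hS⟩ := h𝓕 T f
      exact hT S.2 ⟨F, hF, fun x hx ↦ hS x hx ▸ hf x⟩
  refine ⟨p, fun S hS ↦ ?_⟩
  by_contra hne
  exact Ultrafilter.compl_notMem_iff.2 hS (hp (by simpa using hne))

/-- The `n`-fold tensor power of `p`: a property holds for almost every `v : Fin n → X` if it holds
for `p`-almost every `v 0`, `p`-almost every `v 1`, …, in this order of quantifiers. -/
noncomputable def ultrafilterPow (p : Ultrafilter X) : (n : ℕ) → Ultrafilter (Fin n → X)
  | 0 => pure Fin.elim0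
  | n + 1 => p.bind fun x ↦ (ultrafilterPow p n).map (Fin.cons (α := fun _ ↦ X) x)

theorem eventually_ultrafilterPow_succ {p : Ultrafilter X} {n : ℕ} {P : (Fin (n + 1) → X) → Prop} :
    (∀ᶠ v in ultrafilterPow p (n + 1), P v) ↔
      ∀ᶠ x in p, ∀ᶠ v in ultrafilterPow p n, P (Fin.cons x v) :=
  Iff.rfl

theorem exists_forall_update_of_eventually_ultrafilterPow {p : Ultrafilter X}
    (hp : ∀ S ∈ p, ∃ F ∈ 𝓕, (F : Set X) ⊆ S) {n : ℕ} {P : (Fin n → X) → Prop}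
    (hP : ∀ᶠ v in ultrafilterPow p n, P v) (t : Fin n) :
    ∃ F ∈ 𝓕, ∃ v : Fin n → X, ∀ x ∈ F, P (update v t x) := by
  induction n with
  | zero => exact t.elim0
  | succ n ih =>
    rw [eventually_ultrafilterPow_succ] at hP
    obtain ⟨y, hy⟩ := hP.exists
    cases t using Fin.cases with
    | zero =>
      obtain ⟨F, hF, hFP⟩ := hp _ hP
      obtain ⟨v, hv⟩ := ((eventually_all_finset F).2 fun x hx ↦ hFP hx).exists
      exact ⟨F, hF, Fin.cons y v, fun x hx ↦ by simpa using hv x hx⟩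
    | succ t =>
      obtain ⟨F, hF, v, hv⟩ := ih hy t
      exact ⟨F, hF, Fin.cons y v, fun x hx ↦ by simpa using hv x hx⟩

end PartitionRegular

section GeometricExtension

variable {M : Type u} [CommMonoid M]

theorem prod_pow_add_nsmul {ι : Type*} [Fintype ι] (v : ι → M) (b w : ι → ℕ) (j : ℕ) :
    ∏ i, v i ^ (b + j • w) i = (∏ i, v i ^ b i) * (∏ i, v i ^ w i) ^ j := by
  simp [pow_add, pow_mul', Finset.prod_mul_distrib, Finset.prod_pow]

theorem prod_update_pow {ι : Type*} [Fintype ι] [DecidableEq ι] (v : ι → M) (t : ι) (x : M)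
    (w : ι → ℕ) :
    ∏ i, update v t x i ^ w i = (∏ i ∈ Finset.univ \ {t}, v i ^ w i) * x ^ w t := by
  have h : (fun i ↦ update v t x i ^ w i) = update (fun i ↦ v i ^ w i) t (x ^ w t) :=
    funext fun i ↦ apply_update (fun i y ↦ y ^ w i) v t x i
  rw [h, Finset.prod_update_of_mem (Finset.mem_univ t), mul_comm]

theorem IsPartitionRegular.exists_mono_geometric {𝓕 : Set (Finset M)} (h𝓕 : IsPartitionRegular 𝓕)
    (k : ℕ) {κ : Type*} [Finite κ] (f : M → κ) :
    ∃ F ∈ 𝓕, ∃ b c : M, ∃ s : κ,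
      ∀ x ∈ F, f (c * x) = s ∧ ∀ j ≤ k, f (b * (c * x) ^ j) = s := by
  obtain ⟨n, hn⟩ := exists_forall_hasMonoBrauerProgression k κ
  obtain ⟨p, hp⟩ := h𝓕.exists_ultrafilter
  choose χ hχ using fun w : Fin n → ℕ ↦
    exists_eventually_eq (ultrafilterPow p n) fun v : Fin n → M ↦ f (∏ i, v i ^ w i)
  obtain ⟨b, w, t, hwt, hbt, hbw⟩ := hn χ
  have hmono : ∀ᶠ v : Fin n → M in ultrafilterPow p n, f (∏ i, v i ^ w i) = χ w ∧
      ∀ j ∈ Set.Iic k, f (∏ i, v i ^ (b + j • w) i) = χ w :=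
    (hχ w).and <| (eventually_all_finite (Set.finite_Iic k)).2 fun j hj ↦ hbw j hj ▸ hχ _
  obtain ⟨F, hF, v, hv⟩ := exists_forall_update_of_eventually_ultrafilterPow hp hmono t
  refine ⟨F, hF, ∏ i ∈ Finset.univ \ {t}, v i ^ b i, ∏ i ∈ Finset.univ \ {t}, v i ^ w i, χ w,
    fun x hx ↦ ?_⟩
  simpa only [Set.mem_Iic, prod_pow_add_nsmul, prod_update_pow, hwt, hbt, pow_one, pow_zero,
    mul_one] using hv x hx

end GeometricExtension

section Brauer

/-- The finite sets of positive integers that contain a Brauer configuration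
`d, a, a + d, …, a + k * d`. The terms are compared in `ℕ`, since `0 * d` is not in `ℕ+`. -/
def brauerFamily (k : ℕ) : Set (Finset ℕ+) :=
  {F | ∃ a d : ℕ+, d ∈ F ∧ ∀ i ≤ k, ∃ x ∈ F, (x : ℕ) = a + i * d}

theorem image_mul_left_mem_brauerFamily {k : ℕ} {F : Finset ℕ+} (hF : F ∈ brauerFamily k) (c : ℕ+) :
    F.image (c * ·) ∈ brauerFamily k := by
  obtain ⟨a, d, hd, hF⟩ := hF
  refine ⟨c * a, c * d, Finset.mem_image_of_mem _ hd, fun i hi ↦ ?_⟩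
  obtain ⟨x, hx, hxi⟩ := hF i hi
  refine ⟨c * x, Finset.mem_image_of_mem _ hx, ?_⟩
  rw [PNat.mul_coe, PNat.mul_coe, PNat.mul_coe, hxi]
  ring

theorem isPartitionRegular_singleton {X : Type u} (x : X) : IsPartitionRegular {({x} : Finset X)} :=
  fun _ _ f ↦ ⟨{x}, rfl, f x, by simp⟩

theorem exists_mono_brauer_nat (k : ℕ) {κ : Type*} [Finite κ] (f : ℕ → κ) :
    ∃ a d : ℕ, 0 < d ∧ ∀ j ≤ k, f (a + j * d) = f d := by
  obtain ⟨_, rfl, b, c, s, h⟩ :=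
    (isPartitionRegular_singleton (Multiplicative.ofAdd 1)).exists_mono_geometric k
      (f ∘ Multiplicative.toAdd)
  obtain ⟨hd, had⟩ := h _ (Finset.mem_singleton_self _)
  exact ⟨b.toAdd, c.toAdd + 1, Nat.succ_pos _, fun j hj ↦ (had j hj).trans hd.symm⟩

theorem isPartitionRegular_brauerFamily (k : ℕ) : IsPartitionRegular (brauerFamily k) := by
  intro κ _ f
  -- Giving `0` a colour of its own forces `a` to be positive.
  obtain ⟨a, d, hd, had⟩ := exists_mono_brauer_nat k fun n ↦ (n = 0, f n.toPNat')
  simp only [Prod.mk.injEq, hd.ne', eq_iff_iff, iff_false] at had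
  have ha : 0 < a := by simpa [Nat.pos_iff_ne_zero] using (had 0 k.zero_le).1
  refine ⟨insert d.toPNat' ((Finset.Iic k).image fun j ↦ (a + j * d).toPNat'),
    ⟨a.toPNat', d.toPNat', Finset.mem_insert_self _ _, fun i hi ↦ ⟨_, Finset.mem_insert_of_mem
      (Finset.mem_image_of_mem _ (Finset.mem_Iic.2 hi)), ?_⟩⟩, f d.toPNat', ?_⟩
  · simp [ha, hd]
  · simpa using fun j hj ↦ (had j hj).2

theorem exists_mono_brauer_geometric (k : ℕ) {κ : Type*} [Finite κ] (f : ℕ+ → κ) :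
    ∃ F ∈ brauerFamily k, ∃ b : ℕ+, ∃ s, ∀ x ∈ F, f x = s ∧ ∀ j ≤ k, f (b * x ^ j) = s := by
  obtain ⟨F, hF, b, c, s, h⟩ := (isPartitionRegular_brauerFamily k).exists_mono_geometric k f
  exact ⟨F.image (c * ·), image_mul_left_mem_brauerFamily hF c, b, s, by simpa using h⟩

end Brauer

/-- For every finite partition `A₁, …, A_r` of the positive integers and every
`k ∈ ℕ`, some cell `A_s` contains elements `a, b, d` together with the geo-arithmetic
configuration `{b·(a+i·d)^j : 0 ≤ i,j ≤ k} ∪ {b·d^j : 0 ≤ j ≤ k} ∪ {a+i·d : 0 ≤ i ≤ k}`. -/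
theorem geo_arithmetic_partition (r k : ℕ) (A : Fin r → Set ℕ)
    (hApos : ∀ i : Fin r, ∀ n ∈ A i, 0 < n)
    (hAcover : ∀ n : ℕ, 0 < n → ∃ i : Fin r, n ∈ A i) :
    ∃ (s : Fin r) (a b d : ℕ), a ∈ A s ∧ b ∈ A s ∧ d ∈ A s ∧
      (∀ i j : ℕ, i ≤ k → j ≤ k → b * (a + i * d) ^ j ∈ A s) ∧
      (∀ j : ℕ, j ≤ k → b * d ^ j ∈ A s) ∧
      (∀ i : ℕ, i ≤ k → a + i * d ∈ A s) := by
  choose f hf using fun n : ℕ+ ↦ hAcover n n.pos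
  obtain ⟨F, ⟨a, d, hd, had⟩, b, s, hs⟩ := exists_mono_brauer_geometric k f
  have mem {x : ℕ+} (hx : x ∈ F) : (x : ℕ) ∈ A s := (hs x hx).1 ▸ hf x
  have mul_pow_mem {x : ℕ+} (hx : x ∈ F) (j : ℕ) (hj : j ≤ k) : (b * x ^ j : ℕ) ∈ A s := by
    simpa [(hs x hx).2 j hj] using hf (b * x ^ j)
  have arith_mem (i : ℕ) (hi : i ≤ k) : (a + i * d : ℕ) ∈ A s := by
    obtain ⟨x, hx, hxi⟩ := had i hi
    exact hxi ▸ mem hx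
  refine ⟨s, a, b, d, ?_, ?_, mem hd, fun i j hi hj ↦ ?_, mul_pow_mem hd, arith_mem⟩
  · simpa using arith_mem 0 k.zero_le
  · simpa using mul_pow_mem hd 0 k.zero_le
  · obtain ⟨x, hx, hxi⟩ := had i hi
    exact hxi ▸ mul_pow_mem hx j hj
end

section
/- Let ⟨xₙ⟩ₙ₌₁^∞ be a sequence in ℕ and let A be an IP* set in (ℕ, +). Then there exists a sum subsystem ⟨yₙ⟩ₙ₌₁^∞ of ⟨xₙ⟩ₙ₌₁^∞ such that FS(⟨yₙ⟩ₙ₌₁^∞) ∪ FP(⟨yₙ⟩ₙ₌₁^∞) ⊆ A. -/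
/-- The semigroup operation `+` on ultrafilters: `A ∈ p + q` iff
`{x : {y : x + y ∈ A} ∈ q} ∈ p`. -/
def uadd (p q : Ultrafilter ℕ) : Ultrafilter ℕ :=
  p.bind fun x => q.map fun y => x + y

/-- Finite sums of distinct terms of a sequence. -/
def FS (x : ℕ → ℕ) : Set ℕ :=
  {s | ∃ H : Finset ℕ, H.Nonempty ∧ s = ∑ t ∈ H, x t}

/-- Finite products of distinct terms of a sequence. -/
def FP (x : ℕ → ℕ) : Set ℕ :=
  {s | ∃ H : Finset ℕ, H.Nonempty ∧ s = ∏ t ∈ H, x t}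

/-- `y` is a sum subsystem of `x`: there are nonempty finite sets `Hₙ` with
`max Hₙ < min Hₙ₊₁` and `yₙ = ∑_{t ∈ Hₙ} x_t`. -/
def SumSubsystem (y x : ℕ → ℕ) : Prop :=
  ∃ H : ℕ → Finset ℕ, (∀ n, (H n).Nonempty) ∧
    (∀ n, ∀ i ∈ H n, ∀ j ∈ H (n + 1), i < j) ∧
    (∀ n, y n = ∑ t ∈ H n, x t)

/-- `A` is an IP* set in the positive integers `(ℕ, +)`: it belongs to every
idempotent ultrafilter on the positive integers (encoded as idempotent ultrafilters on ℕ
containing the set of positive integers). -/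
def IPStar (A : Set ℕ) : Prop :=
  ∀ p : Ultrafilter ℕ, {n : ℕ | 0 < n} ∈ p → uadd p p = p → A ∈ p

/-!
Let `T` be the filter on finite sets of indices generated by the nonempty sets beyond `n`, for all
`n`. The ultrafilters finer than the image of `T` under `H ↦ ∑ t ∈ H, x t` form a nonempty closed
subsemigroup of `βℕ`, so one of them, `U`, is idempotent. The blocks are then chosen greedily. For
sums this is the Galvin–Glazer argument: if `B ∈ U` then `-a + B ∈ U` for `U`-many `a`. For
products, membership in the single ultrafilter `U` is not enough, but the IP* sets form a filter
which is coarser than `U` and is preserved by division: `m ↦ a * m` is additive, so it maps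
idempotents to idempotents, and hence `{m | a * m ∈ B}` is IP* whenever `B` is.
-/

open Filter

attribute [local instance] Ultrafilter.add Ultrafilter.addSemigroup

section Stable

/-- The filter `F` is stable under multiplication from the left by `G`-many elements; in terms of
the convolution of filters, `G * F ≤ F`. Both idempotent ultrafilters and the filter of IP* sets
are stable in this sense, which is what a greedy choice of the factors of a product requires. -/
@[to_additive]
def MulStable {M : Type*} [Mul M] (G F : Filter M) : Prop :=
  ∀ B ∈ F, ∀ᶠ a in G, ∀ᶠ b in F, a * b ∈ B

variable {α M N : Type*}

theorem AddStable.map_ofAdd [Add M] {q : Filter α} {f : α → M} {F : Filter M}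
    (h : AddStable (map f q) F) :
    MulStable (map (fun a ↦ Multiplicative.ofAdd (f a)) q) (map Multiplicative.ofAdd F) :=
  fun B hB ↦ h (Multiplicative.ofAdd ⁻¹' B) hB

theorem MulStable.prodMk [Mul M] [Mul N] {q : Filter α} {f : α → M} {g : α → N}
    {F : Filter M} {G : Filter N} (hF : MulStable (map f q) F) (hG : MulStable (map g q) G) :
    MulStable (map (fun a ↦ (f a, g a)) q) (F ×ˢ G) := by
  intro B hB
  obtain ⟨C, hC, D, hD, hCD⟩ := mem_prod_iff.1 hB
  refine eventually_map.2 ?_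
  filter_upwards [eventually_map.1 (hF C hC), eventually_map.1 (hG D hD)] with a haC haD
  filter_upwards [prod_mem_prod haC haD] with b hb using hCD hb

theorem addStable_of_add_self_eq [Add M] {U : Ultrafilter M} (hU : U + U = U) :
    AddStable (U : Filter M) U := by
  intro B hB
  rw [← hU] at hB
  exact hB

theorem AddStable.exists_idempotent_ultrafilter_le [AddSemigroup M] {F : Filter M} [F.NeBot]
    (hF : AddStable F F) : ∃ U : Ultrafilter M, (U : Filter M) ≤ F ∧ U + U = U := by
  have closed : IsClosed {U : Ultrafilter M | (U : Filter M) ≤ F} := by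
    simp only [Filter.le_def, Set.ofPred_forall]
    exact isClosed_biInter fun B _ ↦ ultrafilter_isClosed_basic B
  exact exists_idempotent_in_compact_add_subsemigroup Ultrafilter.continuous_add_left
    {U : Ultrafilter M | (U : Filter M) ≤ F} ⟨Ultrafilter.of F, Ultrafilter.of_le F⟩
    closed.isCompact fun U hU V hV B hB ↦ hU ((hF B hB).mono fun a ha ↦ hV ha)

end Stable

section GreedyChoice

variable {α M : Type*} [CommMonoid M]

theorem exists_prod_mem_of_mul_mem {y : ℕ → M} {B : ℕ → Set M} (hy : ∀ n, y n ∈ B n)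
    (hmul : ∀ m n, m < n → ∀ b ∈ B n, y m * b ∈ B m) {H : Finset ℕ} (hH : H.Nonempty) :
    ∃ i ∈ H, ∏ t ∈ H, y t ∈ B i := by
  induction H using Finset.induction_on_min with
  | empty => exact absurd hH Finset.not_nonempty_empty
  | insert a s has ih =>
    refine ⟨a, Finset.mem_insert_self a s, ?_⟩
    rw [Finset.prod_insert fun ha ↦ lt_irrefl a (has a ha)]
    rcases s.eq_empty_or_nonempty with rfl | hs
    · simpa only [Finset.prod_empty, mul_one] using hy a
    · obtain ⟨i, his, hi⟩ := ih hs
      exact hmul a i (has i his) _ hi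

theorem MulStable.exists_seq_prod_mem {q : Filter α} [q.NeBot] {f : α → M} {F : Filter M}
    (hF : MulStable (map f q) F) (hf : Tendsto f q F) {P : α → Prop} (hP : ∀ᶠ a in q, P a)
    {r : α → α → Prop} (hr : ∀ a, ∀ᶠ b in q, r a b) {A : Set M} (hA : A ∈ F) :
    ∃ u : ℕ → α, (∀ n, P (u n)) ∧ (∀ m n, m < n → r (u m) (u n)) ∧
      ∀ H : Finset ℕ, H.Nonempty → ∏ i ∈ H, f (u i) ∈ A := by
  -- A term `a` is chosen with a set `B` which is to contain all products whose first factor is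
  -- `f a`.
  let Admissible (s : α × Set M) : Prop :=
    P s.1 ∧ f s.1 ∈ s.2 ∧ s.2 ⊆ A ∧ ∀ᶠ b in F, f s.1 * b ∈ s.2
  let Precedes (s t : α × Set M) : Prop := r s.1 t.1 ∧ ∀ b ∈ t.2, f s.1 * b ∈ s.2
  have extend : ∀ S : Finset (α × Set M), (∀ s ∈ S, Admissible s) →
      ∃ t, Admissible t ∧ ∀ s ∈ S, Precedes s t := by
    intro S hS
    let B : Set M := A ∩ {b | ∀ s ∈ S, f s.1 * b ∈ s.2}
    have hB : B ∈ F :=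
      inter_mem hA ((eventually_all_finset S).2 fun s hs ↦ (hS s hs).2.2.2)
    obtain ⟨a, haP, haB, haF, har⟩ := (hP.and <| (hf.eventually_mem hB).and <|
      (eventually_map.1 (hF B hB)).and <| (eventually_all_finset S).2 fun s _ ↦ hr s.1).exists
    exact ⟨(a, B), ⟨haP, haB, Set.inter_subset_left, haF⟩,
      fun s hs ↦ ⟨har s hs, fun b hb ↦ hb.2 s hs⟩⟩
  obtain ⟨u, hu, hlt⟩ := exists_seq_of_forall_finset_exists Admissible Precedes extend
  refine ⟨fun n ↦ (u n).1, fun n ↦ (hu n).1, fun m n hmn ↦ (hlt m n hmn).1, fun H hH ↦ ?_⟩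
  obtain ⟨i, -, hi⟩ := exists_prod_mem_of_mul_mem (B := fun n ↦ (u n).2)
    (fun n ↦ (hu n).2.1) (fun m n hmn ↦ (hlt m n hmn).2) hH
  exact (hu i).2.2.1 hi

end GreedyChoice

section TailBlocks

/-- The filter on the finite sets of indices generated by the sets of all nonempty blocks beyond a
given index. Its image under `H ↦ ∑ t ∈ H, x t` is generated by the sets of finite sums of the tails
of `x`. -/
def tailBlocks : Filter (Finset ℕ) :=
  ⨅ n, 𝓟 {H | H.Nonempty ∧ ∀ i ∈ H, n ≤ i}

theorem hasBasis_tailBlocks :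
    tailBlocks.HasBasis (fun _ ↦ True) fun n ↦ {H : Finset ℕ | H.Nonempty ∧ ∀ i ∈ H, n ≤ i} :=
  hasBasis_iInf_principal <| directed_of_isDirected_le fun _ _ hmn _ hH ↦
    ⟨hH.1, fun i hi ↦ hmn.trans (hH.2 i hi)⟩

instance tailBlocks_neBot : tailBlocks.NeBot :=
  hasBasis_tailBlocks.neBot_iff.2 fun {n} _ ↦ ⟨{n}, by simp⟩

theorem eventually_tailBlocks_nonempty : ∀ᶠ H in tailBlocks, H.Nonempty :=
  hasBasis_tailBlocks.eventually_iff.2 ⟨0, trivial, fun _ hH ↦ hH.1⟩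

theorem eventually_tailBlocks_lt (K : Finset ℕ) :
    ∀ᶠ H in tailBlocks, ∀ i ∈ K, ∀ j ∈ H, i < j :=
  hasBasis_tailBlocks.eventually_iff.2 ⟨K.sup id + 1, trivial, fun _ hH _ hi j hj ↦
    (Nat.lt_succ_of_le (Finset.le_sup (f := id) hi)).trans_le (hH.2 j hj)⟩

theorem addStable_map_sum_tailBlocks {M : Type*} [AddCommMonoid M] (x : ℕ → M) :
    AddStable (map (fun H ↦ ∑ t ∈ H, x t) tailBlocks) (map (fun H ↦ ∑ t ∈ H, x t) tailBlocks) := by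
  intro B hB
  obtain ⟨n, -, hn⟩ := hasBasis_tailBlocks.eventually_iff.1 hB
  refine eventually_map.2 ?_
  filter_upwards [hasBasis_tailBlocks.mem_of_mem (i := n) trivial] with K hK
  refine eventually_map.2 ?_
  filter_upwards [hasBasis_tailBlocks.mem_of_mem (i := n) trivial, eventually_tailBlocks_lt K]
    with H hH hKH
  have disjoint : Disjoint K H :=
    Finset.disjoint_left.2 fun _ hiK hiH ↦ lt_irrefl _ (hKH _ hiK _ hiH)
  rw [← Finset.sum_union disjoint]
  refine hn ⟨hK.1.mono Finset.subset_union_left, fun i hi ↦ ?_⟩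
  exact (Finset.mem_union.1 hi).elim (hK.2 i) (hH.2 i)

theorem exists_idempotent_ultrafilter_le_map_sum_tailBlocks {M : Type*} [AddCommMonoid M]
    (x : ℕ → M) :
    ∃ U : Ultrafilter M, (U : Filter M) ≤ map (fun H ↦ ∑ t ∈ H, x t) tailBlocks ∧ U + U = U :=
  (addStable_map_sum_tailBlocks x).exists_idempotent_ultrafilter_le

end TailBlocks

section IPStar

/-- The filter of the sets that are IP* relative to `S`: those that belong to every idempotent
ultrafilter containing `S`. -/
def ipStarFilter {M : Type*} [Add M] (S : Set M) : Filter M :=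
  ⨆ (U : Ultrafilter M) (_ : S ∈ U) (_ : U + U = U), (U : Filter M)

theorem mem_ipStarFilter {M : Type*} [Add M] {S A : Set M} :
    A ∈ ipStarFilter S ↔ ∀ U : Ultrafilter M, S ∈ U → U + U = U → A ∈ U := by
  simp only [ipStarFilter, mem_iSup, Ultrafilter.mem_coe]

theorem ultrafilter_map_add {M N : Type*} [Add M] [Add N] (f : M →ₙ+ N) (U V : Ultrafilter M) :
    (U + V).map f = U.map f + V.map f := by
  refine Ultrafilter.coe_inj.1 (Filter.ext' fun P ↦ ?_)
  simp only [Ultrafilter.coe_map, eventually_map, Ultrafilter.eventually_add, map_add]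

variable {R : Type*}

theorem tendsto_mul_left_ipStarFilter [Mul R] [Add R] [LeftDistribClass R] {S : Subsemigroup R}
    {a : R} (ha : a ∈ S) :
    Tendsto (a * ·) (ipStarFilter (S : Set R)) (ipStarFilter (S : Set R)) := by
  intro B hB
  refine mem_ipStarFilter.2 fun U hSU hU ↦ ?_
  let mulLeft : R →ₙ+ R := ⟨(a * ·), mul_add a⟩
  have hmem : (S : Set R) ∈ U.map mulLeft :=
    Ultrafilter.mem_map.2 (mem_of_superset hSU fun m hm ↦ S.mul_mem ha hm)
  have hidem : U.map mulLeft + U.map mulLeft = U.map mulLeft := by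
    rw [← ultrafilter_map_add, hU]
  exact mem_ipStarFilter.1 hB (U.map mulLeft) hmem hidem

theorem mulStable_ipStarFilter [Mul R] [Add R] [LeftDistribClass R] {S : Subsemigroup R}
    {G : Filter R} (hG : ∀ᶠ a in G, a ∈ S) : MulStable G (ipStarFilter (S : Set R)) :=
  fun _ hB ↦ hG.mono fun _ ha ↦ (tendsto_mul_left_ipStarFilter ha).eventually_mem hB

end IPStar

theorem ipstar_sum_subsystem_general {R : Type*} [CommSemiring R] (S : Subsemigroup R)
    (x : ℕ → R) (hx : ∀ H : Finset ℕ, H.Nonempty → ∑ t ∈ H, x t ∈ S) {A : Set R}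
    (hA : A ∈ ipStarFilter (S : Set R)) :
    ∃ K : ℕ → Finset ℕ, (∀ n, (K n).Nonempty) ∧ (∀ m n, m < n → ∀ i ∈ K m, ∀ j ∈ K n, i < j) ∧
      ∀ H : Finset ℕ, H.Nonempty →
        ∑ n ∈ H, ∑ t ∈ K n, x t ∈ A ∧ ∏ n ∈ H, ∑ t ∈ K n, x t ∈ A := by
  obtain ⟨U, hU, hUU⟩ := exists_idempotent_ultrafilter_le_map_sum_tailBlocks x
  let blockSum (H : Finset ℕ) : R := ∑ t ∈ H, x t
  let q : Filter (Finset ℕ) := tailBlocks ⊓ comap blockSum U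
  have : q.NeBot := neBot_inf_comap_iff_map.2 <| by rw [inf_eq_right.2 hU]; infer_instance
  have hqU : Tendsto blockSum q U := tendsto_comap.mono_left inf_le_right
  have hS : (S : Set R) ∈ U := hU (eventually_map.2 (eventually_tailBlocks_nonempty.mono hx))
  have hUA : (U : Filter R) ≤ ipStarFilter (S : Set R) := fun B hB ↦ mem_ipStarFilter.1 hB U hS hUU
  have hadd : AddStable (map blockSum q) U := fun B hB ↦ hqU (addStable_of_add_self_eq hUU B hB)
  have hmul : MulStable (map blockSum q) (ipStarFilter (S : Set R)) :=
    mulStable_ipStarFilter (hqU.eventually_mem hS)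
  -- In `Multiplicative R × R` a product records a sum and a product in `R` simultaneously.
  obtain ⟨K, hne, hlt, hK⟩ := (hadd.map_ofAdd.prodMk hmul).exists_seq_prod_mem
    ((tendsto_map.comp hqU).prodMk (hqU.mono_right hUA))
    (eventually_tailBlocks_nonempty.filter_mono inf_le_left)
    (fun H ↦ (eventually_tailBlocks_lt H).filter_mono inf_le_left)
    (prod_mem_prod (s := Multiplicative.toAdd ⁻¹' A) (mem_ipStarFilter.1 hA U hS hUU) hA)
  refine ⟨K, hne, hlt, fun H hH ↦ ?_⟩
  simpa only [Set.mem_prod, Set.mem_preimage, Prod.fst_prod, Prod.snd_prod, toAdd_prod,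
    toAdd_ofAdd] using hK H hH

theorem uadd_eq_add (p q : Ultrafilter ℕ) : uadd p q = p + q :=
  Ultrafilter.coe_inj.1 (Filter.ext' fun _ ↦ Iff.rfl)

theorem IPStar.mem_ipStarFilter {A : Set ℕ} (hA : IPStar A) :
    A ∈ ipStarFilter (Submonoid.pos ℕ : Set ℕ) :=
  _root_.mem_ipStarFilter.2 fun U hpos hU ↦ hA U hpos ((uadd_eq_add U U).trans hU)

/-- For every sequence `⟨xₙ⟩` in the positive integers and every IP* set `A`
in `(ℕ, +)`, there is a sum subsystem `⟨yₙ⟩` of `⟨xₙ⟩` with `FS(⟨yₙ⟩) ∪ FP(⟨yₙ⟩) ⊆ A`. -/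
theorem ipstar_sum_subsystem (x : ℕ → ℕ) (hx : ∀ n, 0 < x n)
    (A : Set ℕ) (hA : IPStar A) :
    ∃ y : ℕ → ℕ, SumSubsystem y x ∧ FS y ∪ FP y ⊆ A := by
  have hpos : ∀ H : Finset ℕ, H.Nonempty → ∑ t ∈ H, x t ∈ (Submonoid.pos ℕ).toSubsemigroup :=
    fun H hH ↦ Finset.sum_pos (fun t _ ↦ hx t) hH
  obtain ⟨K, hne, hlt, hK⟩ :=
    ipstar_sum_subsystem_general (Submonoid.pos ℕ).toSubsemigroup x hpos hA.mem_ipStarFilter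
  refine ⟨fun n ↦ ∑ t ∈ K n, x t, ⟨K, hne, fun n ↦ hlt n (n + 1) n.lt_succ_self, fun _ ↦ rfl⟩, ?_⟩
  rintro _ (⟨H, hH, rfl⟩ | ⟨H, hH, rfl⟩)
  exacts [(hK H hH).1, (hK H hH).2]
end

section
/- Let u, v ∈ ℕ, let M be a u × v finite matrix with entries from ℚ that is image partition regular over ℕ, and let N be an infinite (ω × ω) matrix that is image partition regular near 0 over a dense subsemigroup S of ((0, ∞), +). Then the block diagonal matrix ( M 0 ; 0 N ) is image partition regular near 0 over S. -/
/-!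
By compactness there is a finite set `A` of positive integers such that every colouring of `A` with
the given colours makes the entries of some `Mx⃗`, with `x⃗` positive, monochromatic. Colour `s` by
the tuple of colours of its multiples `t • s`, `t ∈ A`. If the entries of `Ny⃗` all receive the
same tuple, then the colour of `t • b`, with `b` an entry of `Ny⃗`, depends only on `t`, so it
colours `A`. Let `F ⊆ A` be a monochromatic set containing the entries of `Mx⃗`: all products
`t • b` with `t ∈ F` share one colour. Among them are the entries of `M(d • x⃗)`, with `d` a fixed
entry of `Ny⃗`, and those of `N(t • y⃗)`, with `t` a fixed element of `F`. All these products are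
small if the entries of `Ny⃗` are small enough in terms of `A`.
-/

/-- `M` (a `u × v` matrix over ℚ) is image partition regular over the positive
integers: for every finite partition of the positive integers there exist a cell `E i`
and a vector `x⃗` of positive integers with all entries of `Mx⃗` in `E i`. -/
def IPRoverN (u v : ℕ) (M : Matrix (Fin u) (Fin v) ℚ) : Prop :=
  ∀ (r : ℕ) (E : Fin r → Set ℕ), (∀ n : ℕ, 0 < n → ∃ i, n ∈ E i) →
    ∃ (i : Fin r) (x : Fin v → ℕ), (∀ j, 0 < x j) ∧
      ∀ a : Fin u, ∃ n ∈ E i, M.mulVec (fun j => (x j : ℚ)) a = (n : ℚ)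

/-- The `a`-th entry of `N·y` for an `ω × ω` matrix `N` over ℚ (with finitely many
nonzero entries in each row) and a real vector `y`. -/
noncomputable def rowEntry (N : ℕ → ℕ → ℚ) (y : ℕ → ℝ) (a : ℕ) : ℝ :=
  ∑ᶠ j, (N a j : ℝ) * y j

/-- `N` is image partition regular near 0 over `S`: for every finite partition of `S`
and every `ε > 0` there are a cell `E i` and a vector `y⃗` with entries from `S` such
that all entries of `Ny⃗` lie in `E i ∩ (0, ε)`. -/
def IPRNearZero (S : Set ℝ) (N : ℕ → ℕ → ℚ) : Prop :=
  ∀ (r : ℕ) (E : Fin r → Set ℝ), (∀ i, E i ⊆ S) → (∀ s ∈ S, ∃ i, s ∈ E i) →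
    ∀ ε > (0 : ℝ),
      ∃ (i : Fin r) (y : ℕ → ℝ), (∀ j, y j ∈ S) ∧
        ∀ a : ℕ, rowEntry N y a ∈ E i ∩ Set.Ioo 0 ε

open Set Matrix
open scoped Pointwise

section Colouring

variable {α κ X : Type*}

/-- A set `s` is monochromatic for the colouring `c` if all its elements get the same colour. The
empty set is monochromatic, even when there are no colours. -/
def IsMonochromatic (c : α → κ) (s : Set α) : Prop :=
  ∀ ⦃a⦄, a ∈ s → ∀ ⦃b⦄, b ∈ s → c a = c b

theorem exists_finset_forall_exists_subset_isMonochromatic [Finite κ] {𝓕 : Set (Finset α)}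
    (h𝓕 : ∀ c : α → κ, ∃ F ∈ 𝓕, IsMonochromatic c F) :
    ∃ A : Finset α, ∀ c : α → κ, ∃ F ∈ 𝓕, F ⊆ A ∧ IsMonochromatic c F := by
  by_contra! hbad
  choose c hc using hbad
  obtain ⟨χ, hχ⟩ := Finset.rado_selection c
  obtain ⟨F, hF, hFχ⟩ := h𝓕 χ
  obtain ⟨A, hFA, hχA⟩ := hχ F
  refine hc A F hF hFA fun a ha b hb => ?_
  rw [← hχA a ha, ← hχA b hb, hFχ ha hb]

theorem exists_finset_forall_exists_isMonochromatic_smul [Finite κ] [SMul α X]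
    {𝓕 : Set (Finset α)} (h𝓕 : ∀ c : α → κ, ∃ F ∈ 𝓕, IsMonochromatic c F) :
    ∃ A : Finset α, ∀ (χ : X → κ) (B : Set X), B.Nonempty →
      IsMonochromatic (fun b (t : A) => χ ((t : α) • b)) B →
        ∃ F ∈ 𝓕, F ⊆ A ∧ IsMonochromatic χ ((F : Set α) • B) := by
  obtain ⟨A, hA⟩ := exists_finset_forall_exists_subset_isMonochromatic h𝓕
  refine ⟨A, fun χ B ⟨d, hd⟩ hB => ?_⟩
  obtain ⟨F, hF, hFA, hFχ⟩ := hA fun t => χ (t • d)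
  have hχd : ∀ t ∈ F, ∀ b ∈ B, χ (t • b) = χ (t • d) := fun t ht b hb =>
    congrFun (hB hb hd) ⟨t, hFA ht⟩
  refine ⟨F, hF, hFA, ?_⟩
  rintro _ ⟨t, ht, b, hb, rfl⟩ _ ⟨t', ht', b', hb', rfl⟩
  exact (hχd t ht b hb).trans ((hFχ ht ht').trans (hχd t' ht' b' hb').symm)

end Colouring

section Matrices

/-- The finite nonempty sets of positive integers that contain all entries of `Mx⃗` for some vector
`x⃗` of positive integers. Nonemptiness matters only when `M` has no rows. -/
def posImageSupersets {m n : Type*} [Fintype n] (M : Matrix m n ℚ) : Set (Finset ℕ) :=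
  {F | F.Nonempty ∧ (∀ t ∈ F, 0 < t) ∧ ∃ x : n → ℕ, (∀ j, 0 < x j) ∧
    ∀ a, ∃ t ∈ F, (M *ᵥ fun j => (x j : ℚ)) a = t}

theorem IPRoverN.exists_mem_posImageSupersets_isMonochromatic {u v : ℕ}
    {M : Matrix (Fin u) (Fin v) ℚ} (hM : IPRoverN u v M) {κ : Type*} [Finite κ] (c : ℕ → κ) :
    ∃ F ∈ posImageSupersets M, IsMonochromatic c F := by
  -- Using only colours attained on the positive integers makes every cell nonempty.
  obtain ⟨r, ⟨e⟩⟩ := Finite.exists_equiv_fin (c '' Ioi 0)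
  obtain ⟨i, x, hx, hxE⟩ := hM r (fun i => {t | 0 < t ∧ c t = e.symm i})
    fun t ht => ⟨e ⟨c t, mem_image_of_mem c ht⟩, ht, by simp⟩
  obtain ⟨t₀, ht₀, hct₀⟩ := (e.symm i).2
  choose t ht hMt using hxE
  refine ⟨insert t₀ (Finset.univ.image t), ⟨Finset.insert_nonempty _ _, ?_, x, hx, fun a =>
    ⟨t a, by simp, hMt a⟩⟩, ?_⟩
  · simpa using ⟨ht₀, fun a => (ht a).1⟩
  · have hc : ∀ s ∈ insert t₀ (Finset.univ.image t), c s = e.symm i := by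
      simpa using ⟨hct₀, fun a => (ht a).2⟩
    exact fun s hs s' hs' => (hc s hs).trans (hc s' hs').symm

theorem map_ratCast_mulVec_nsmul {K m n : Type*} [DivisionRing K] [CharZero K] [Fintype n]
    (M : Matrix m n ℚ) (x : n → ℕ) (d : K) {a : m} {t : ℕ}
    (h : (M *ᵥ fun j => (x j : ℚ)) a = t) :
    (M.map ((↑) : ℚ → K) *ᵥ fun j => x j • d) a = t • d := by
  have hcast : ∑ j, (M a j : K) * x j = t := by
    simpa [mulVec, dotProduct] using congrArg ((↑) : ℚ → K) h
  simp only [mulVec, dotProduct, map_apply, nsmul_eq_mul, ← hcast, Finset.sum_mul, mul_assoc]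

theorem rowEntry_nsmul (N : ℕ → ℕ → ℚ) (t : ℕ) (y : ℕ → ℝ) :
    rowEntry N (t • y) = t • rowEntry N y := by
  funext a
  simp only [rowEntry, Pi.smul_apply, smul_finsum, mul_smul_comm]

end Matrices

section PositiveMultiples

theorem nsmul_mem_of_pos {R : Type*} [AddMonoid R] (S : AddSubsemigroup R) {s : R} (hs : s ∈ S)
    {t : ℕ} (ht : 0 < t) : t • s ∈ S := by
  induction t, ht using Nat.le_induction with
  | base => rwa [one_nsmul]
  | succ t _ ih => rw [succ_nsmul]; exact S.add_mem ih hs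

theorem nsmul_mem_Ioo_of_mem_Ioo_div {K : Type*} [Field K] [LinearOrder K]
    [IsStrictOrderedRing K] {b ε : K} {t n : ℕ} (ht : 0 < t) (htn : t ≤ n)
    (hb : b ∈ Ioo 0 (ε / n)) : t • b ∈ Ioo 0 ε := by
  have hn : (0 : K) < n := Nat.cast_pos.2 (ht.trans_le htn)
  refine ⟨nsmul_pos hb.1 ht.ne', ?_⟩
  calc t • b ≤ n • b := nsmul_le_nsmul_left hb.1.le htn
    _ = b * n := by rw [nsmul_eq_mul, mul_comm]
    _ < ε := (lt_div_iff₀ hn).1 hb.2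

end PositiveMultiples

section NearZero

variable {K J I : Type*}

/-- Image partition regularity near 0 over `S` of an arbitrary map `T` on vectors. For the map
`rowEntry N` given by a matrix `N` this unfolds to `IPRNearZero S N`. -/
def MapIPRNearZero [Zero K] [Preorder K] (S : Set K) (T : (J → K) → I → K) : Prop :=
  ∀ (r : ℕ) (E : Fin r → Set K), (∀ i, E i ⊆ S) → (∀ s ∈ S, ∃ i, s ∈ E i) →
    ∀ ε > (0 : K), ∃ (i : Fin r) (y : J → K), (∀ j, y j ∈ S) ∧ ∀ a, T y a ∈ E i ∩ Ioo 0 ε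

theorem MapIPRNearZero.exists_isMonochromatic_range [Zero K] [Preorder K] {S : Set K}
    {T : (J → K) → I → K} (hT : MapIPRNearZero S T) {κ : Type*} [Finite κ] (χ : K → κ)
    {ε : K} (hε : 0 < ε) :
    ∃ y : J → K, (∀ j, y j ∈ S) ∧ (∀ a, T y a ∈ S ∩ Ioo 0 ε) ∧
      IsMonochromatic χ (range (T y)) := by
  obtain ⟨r, ⟨e⟩⟩ := Finite.exists_equiv_fin κ
  obtain ⟨i, y, hyS, hy⟩ := hT r (fun i => {s ∈ S | e (χ s) = i}) (fun _ => sep_subset _ _)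
    (fun s hs => ⟨_, hs, rfl⟩) ε hε
  refine ⟨y, hyS, fun a => ⟨(hy a).1.1, (hy a).2⟩, ?_⟩
  rintro _ ⟨a, rfl⟩ _ ⟨b, rfl⟩
  exact e.injective ((hy a).1.2.trans (hy b).1.2.symm)

variable [Field K] [LinearOrder K] [IsStrictOrderedRing K]

theorem MapIPRNearZero.exists_smul_range_subset [Nonempty I] {S : AddSubsemigroup K}
    {T : (J → K) → I → K} (hT : MapIPRNearZero (S : Set K) T) {r : ℕ} {𝓕 : Set (Finset ℕ)}
    (hne : ∀ F ∈ 𝓕, F.Nonempty) (hpos : ∀ F ∈ 𝓕, ∀ t ∈ F, 0 < t)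
    (h𝓕 : ∀ c : ℕ → Set (Fin r), ∃ F ∈ 𝓕, IsMonochromatic c F)
    {E : Fin r → Set K} (hE : ∀ s ∈ S, ∃ i, s ∈ E i) {ε : K} (hε : 0 < ε) :
    ∃ i, ∃ F ∈ 𝓕, ∃ y : J → K, (∀ j, y j ∈ S) ∧ (∀ a, T y a ∈ S) ∧
      (F : Set ℕ) • range (T y) ⊆ E i ∩ Ioo 0 ε := by
  -- Colouring `s` by the set of all cells containing it avoids choosing a cell.
  let χ : K → Set (Fin r) := fun s => {i | s ∈ E i}
  obtain ⟨A, hA⟩ := exists_finset_forall_exists_isMonochromatic_smul (X := K) h𝓕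
  obtain ⟨n, hAn⟩ := A.exists_le
  obtain ⟨y, hyS, hTy, hmono⟩ := hT.exists_isMonochromatic_range
    (fun s (t : A) => χ ((t : ℕ) • s)) (div_pos hε (Nat.cast_pos.2 n.succ_pos))
  obtain ⟨F, hF, hFA, hFχ⟩ := hA χ _ (range_nonempty _) hmono
  obtain ⟨t, ht⟩ := hne F hF
  obtain ⟨_, a, rfl⟩ := range_nonempty (T y)
  obtain ⟨i, hi⟩ := hE _ (nsmul_mem_of_pos S (hTy a).1 (hpos F hF t ht))
  refine ⟨i, F, hF, y, hyS, fun a => (hTy a).1, fun p hp => ⟨?_, ?_⟩⟩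
  · have hχ : χ (t • T y a) = χ p := hFχ (smul_mem_smul ht (mem_range_self a)) hp
    exact hχ.subset hi
  · obtain ⟨t', ht', _, ⟨a', rfl⟩, rfl⟩ := hp
    exact nsmul_mem_Ioo_of_mem_Ioo_div (hpos F hF t' ht') ((hAn t' (hFA ht')).trans n.le_succ)
      (hTy a').2

theorem block_diagonal_iprNearZero_general [Nonempty I] (S : AddSubsemigroup K)
    {u v : ℕ} {M : Matrix (Fin u) (Fin v) ℚ} (hM : IPRoverN u v M)
    {T : (J → K) → I → K} (hTsmul : ∀ (t : ℕ) (y : J → K), T (t • y) = t • T y)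
    (hT : MapIPRNearZero (S : Set K) T)
    {r : ℕ} {E : Fin r → Set K} (hE : ∀ s ∈ S, ∃ i, s ∈ E i) {ε : K} (hε : 0 < ε) :
    ∃ (i : Fin r) (x : Fin v → K) (y : J → K),
      (∀ j, x j ∈ S) ∧ (∀ j, y j ∈ S) ∧
      (∀ a, (M.map ((↑) : ℚ → K) *ᵥ x) a ∈ E i ∩ Ioo 0 ε) ∧
      (∀ a, T y a ∈ E i ∩ Ioo 0 ε) := by
  obtain ⟨i, F, ⟨⟨t, ht⟩, hpos, x, hx, hMx⟩, y, hyS, hTS, hsub⟩ :=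
    hT.exists_smul_range_subset (fun _ hF => hF.1) (fun _ hF => hF.2.1)
      hM.exists_mem_posImageSupersets_isMonochromatic hE hε
  obtain ⟨d, hd⟩ := range_nonempty (T y)
  have hdS : d ∈ S := by
    obtain ⟨a, rfl⟩ := hd
    exact hTS a
  refine ⟨i, fun j => x j • d, t • y, fun j => nsmul_mem_of_pos S hdS (hx j),
    fun j => nsmul_mem_of_pos S (hyS j) (hpos t ht), fun a => ?_, fun a => ?_⟩
  · obtain ⟨s, hs, hMs⟩ := hMx a
    rw [map_ratCast_mulVec_nsmul M x d hMs]
    exact hsub (smul_mem_smul hs hd)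
  · rw [hTsmul]
    exact hsub (smul_mem_smul ht (mem_range_self a))

end NearZero

/-- If `M` is a finite `u × v` matrix over ℚ that is image partition
regular over ℕ, and `N` is an `ω × ω` matrix that is image partition regular near 0
over a dense subsemigroup `S` of `((0, ∞), +)`, then the block diagonal matrix
`(M 0; 0 N)` — acting on `(x⃗; y⃗)` by `(Mx⃗; Ny⃗)` — is image partition regular near 0
over `S`. -/
theorem block_diagonal_iprNearZero (S : Set ℝ)
    (hSpos : S ⊆ Set.Ioi 0)
    (hSadd : ∀ a ∈ S, ∀ b ∈ S, a + b ∈ S)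
    (hSdense : ∀ x ∈ Set.Ioi (0 : ℝ), ∀ ε > 0, ∃ s ∈ S, |x - s| < ε)
    (u v : ℕ) (M : Matrix (Fin u) (Fin v) ℚ) (hM : IPRoverN u v M)
    (N : ℕ → ℕ → ℚ) (hNrow : ∀ a, {j | N a j ≠ 0}.Finite)
    (hN : IPRNearZero S N) :
    ∀ (r : ℕ) (E : Fin r → Set ℝ), (∀ i, E i ⊆ S) → (∀ s ∈ S, ∃ i, s ∈ E i) →
      ∀ ε > (0 : ℝ),
        ∃ (i : Fin r) (x : Fin v → ℝ) (y : ℕ → ℝ),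
          (∀ j, x j ∈ S) ∧ (∀ j, y j ∈ S) ∧
          (∀ a : Fin u, (M.map ((↑) : ℚ → ℝ)).mulVec x a ∈ E i ∩ Set.Ioo 0 ε) ∧
          (∀ a : ℕ, rowEntry N y a ∈ E i ∩ Set.Ioo 0 ε) := by
  intro r E _ hE ε hε
  exact block_diagonal_iprNearZero_general ⟨S, fun ha hb => hSadd _ ha _ hb⟩ hM
    (rowEntry_nsmul N) hN hE hε
end
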